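/- arXiv:1506.06383 — 3 statements merged into one kernel-verified Lean document; each statement's English description precedes it below -/
import Mathlib

section
/- Let d ≥ 2 and let φ : ℝ^d → ℝ be smooth with compact support. Then there is a constant C (depending on φ) such that |(-Δ)^{1/2}φ(x)| ≤ C(1+|x|)^{-d-1} for all x ∈ ℝ^d. -/
open MeasureTheory Real Metric Set
open scoped FourierTransform ENNReal
noncomputable section

/-- The Riesz potential normalizing constant. -/
def rieszConst (d : ℕ) (a : ℝ) : ℝ :=
  Real.Gamma (((d : ℝ) - a) / 2) / (2 ^ a * Real.pi ^ ((d : ℝ) / 2) * Real.Gamma (a / 2))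

/-- The Riesz potential `I_a[f]`. -/
def rieszPotential (d : ℕ) (a : ℝ) (f : EuclideanSpace ℝ (Fin d) → ℝ)
    (x : EuclideanSpace ℝ (Fin d)) : ℝ :=
  rieszConst d a * ∫ y, f y * ‖x - y‖ ^ (a - (d : ℝ))

/-- `(-Δ)^{1/2}`, the Fourier multiplier with symbol `|ξ|`. -/
def halfLaplacian (d : ℕ) (φ : EuclideanSpace ℝ (Fin d) → ℝ)
    (x : EuclideanSpace ℝ (Fin d)) : ℝ :=
  (𝓕⁻ (fun ξ : EuclideanSpace ℝ (Fin d) => (‖ξ‖ : ℂ) * 𝓕 (fun y => (φ y : ℂ)) ξ) x).re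

/-- Hausdorff content of order `α` via coverings by closed balls. -/
def hausdorffContent (d : ℕ) (α : ℝ) (ω : Set (EuclideanSpace ℝ (Fin d))) : ℝ≥0∞ :=
  ⨅ (c : ℕ → EuclideanSpace ℝ (Fin d)) (r : ℕ → ℝ) (_ : ∀ j, 0 < r j)
    (_ : ω ⊆ ⋃ j, Metric.closedBall (c j) (r j)), ∑' j, ENNReal.ofReal (r j ^ α)

/-- The Laplacian. -/
def laplacian (d : ℕ) (f : EuclideanSpace ℝ (Fin d) → ℝ) (x : EuclideanSpace ℝ (Fin d)) : ℝ :=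
  ∑ i : Fin d, iteratedFDeriv ℝ 2 f x ![EuclideanSpace.single i 1, EuclideanSpace.single i 1]

/-- Fractional maximal function of order `a`. -/
def fracMaximal (d : ℕ) (a : ℝ) (f : EuclideanSpace ℝ (Fin d) → ℝ)
    (x : EuclideanSpace ℝ (Fin d)) : ℝ≥0∞ :=
  ⨆ (r : ℝ) (_ : 0 < r), ENNReal.ofReal (r ^ (a - (d : ℝ))) *
    ∫⁻ y in Metric.closedBall x r, ENNReal.ofReal |f y|

/-- BMO seminorm (as an extended real). -/
def bmoNorm (d : ℕ) (g : EuclideanSpace ℝ (Fin d) → ℝ) : ℝ≥0∞ :=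
  ⨆ (x : EuclideanSpace ℝ (Fin d)) (r : ℝ) (_ : 0 < r),
    ENNReal.ofReal (⨍ y in Metric.ball x r, |g y - ⨍ z in Metric.ball x r, g z|)

/-!
Since `1 - exp(-(r / s)²)` integrates in `s` over `(0, ∞)` to a multiple of `r`, the multiplier
`‖ξ‖` is a superposition of the multipliers `1 - exp(-(‖ξ‖ / s)²)`, so `(-Δ)^{1/2} f (x)` is a
multiple of `∫₀^∞ (f x - (h_s * f) x) ds` with `h_s` a heat kernel. If `f` vanishes within
distance `ρ` of `x`, then `f x = 0` and `|(h_s * f) x|` is at most `sup_{‖z‖ ≥ ρ} h_s(z) · ‖f‖₁`;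
rescaling `s` by `ρ` shows that the integral of these suprema is a multiple of `ρ^{-d-1}`.
For compactly supported `f` and large `x` one may take `ρ` comparable to `1 + ‖x‖`, and for the
remaining `x` it suffices that `‖ξ‖ 𝓕 f(ξ)` is integrable.
-/

/-- The Gaussian defect `1 - exp(-u²)`. Along `u = r / s` its integral over
`s > 0` is a multiple of `r`, which expresses the multiplier `‖ξ‖` through Gaussians. -/
def gaussianDefect (u : ℝ) : ℝ := 1 - rexp (-u ^ 2)

lemma gaussianDefect_nonneg (u : ℝ) : 0 ≤ gaussianDefect u := by
  simp [gaussianDefect, sq_nonneg]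

lemma gaussianDefect_pos {u : ℝ} (hu : u ≠ 0) : 0 < gaussianDefect u := by
  simpa [gaussianDefect] using pow_pos (abs_pos.mpr hu) 2

lemma gaussianDefect_le_one (u : ℝ) : gaussianDefect u ≤ 1 := by
  simp [gaussianDefect, exp_nonneg]

lemma gaussianDefect_le_sq (u : ℝ) : gaussianDefect u ≤ u ^ 2 := by
  unfold gaussianDefect
  linarith [add_one_le_exp (-u ^ 2)]

lemma continuous_gaussianDefect : Continuous gaussianDefect := by
  unfold gaussianDefect
  fun_prop

lemma norm_gaussianDefect (u : ℝ) : ‖gaussianDefect u‖ = gaussianDefect u :=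
  Real.norm_of_nonneg (gaussianDefect_nonneg u)

lemma integrableOn_gaussianDefect_inv : IntegrableOn (fun s ↦ gaussianDefect s⁻¹) (Ioi 0) := by
  have hmeas : Measurable fun s : ℝ ↦ gaussianDefect s⁻¹ :=
    continuous_gaussianDefect.measurable.comp measurable_inv
  rw [← Ioc_union_Ioi_eq_Ioi zero_le_one]
  refine IntegrableOn.union ?_ ?_
  · refine Integrable.mono' (integrable_const (1 : ℝ)) hmeas.aestronglyMeasurable ?_
    exact .of_forall fun s ↦ (norm_gaussianDefect _).trans_le (gaussianDefect_le_one _)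
  · refine Integrable.mono' (integrableOn_Ioi_rpow_of_lt (a := -2) (by norm_num) one_pos)
      hmeas.aestronglyMeasurable ?_
    filter_upwards [ae_restrict_mem measurableSet_Ioi] with s (hs : 1 < s)
    rw [norm_gaussianDefect, rpow_neg (by positivity), rpow_two, ← inv_pow]
    exact gaussianDefect_le_sq _

/-- The normalizing constant `∫₀^∞ (1 - exp(-s⁻²)) ds` of the subordination formula. -/
def subordinationConst : ℝ := ∫ s in Ioi 0, gaussianDefect s⁻¹

lemma subordinationConst_pos : 0 < subordinationConst := by
  rw [subordinationConst, setIntegral_pos_iff_support_of_nonneg_ae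
    (.of_forall fun _ ↦ gaussianDefect_nonneg _) integrableOn_gaussianDefect_inv]
  have hsupp : Ioi 0 ⊆ Function.support fun s ↦ gaussianDefect s⁻¹ :=
    fun s (hs : 0 < s) ↦ (gaussianDefect_pos (inv_ne_zero hs.ne')).ne'
  simp [inter_eq_right.mpr hsupp]

lemma gaussianDefect_div (r : ℝ) :
    (fun s ↦ gaussianDefect (r / s)) = fun s ↦ gaussianDefect (r⁻¹ * s)⁻¹ := by
  simp only [mul_inv, inv_inv, div_eq_mul_inv]

lemma integrableOn_gaussianDefect_div {r : ℝ} (hr : 0 ≤ r) :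
    IntegrableOn (fun s ↦ gaussianDefect (r / s)) (Ioi 0) := by
  rcases hr.eq_or_lt with rfl | hr
  · simp [gaussianDefect]
  · rw [gaussianDefect_div, integrableOn_Ioi_comp_mul_left_iff (fun s ↦ gaussianDefect s⁻¹) 0
      (inv_pos.mpr hr), mul_zero]
    exact integrableOn_gaussianDefect_inv

lemma integral_gaussianDefect_div {r : ℝ} (hr : 0 ≤ r) :
    ∫ s in Ioi 0, gaussianDefect (r / s) = subordinationConst * r := by
  rcases hr.eq_or_lt with rfl | hr
  · simp [gaussianDefect]
  · rw [gaussianDefect_div, integral_comp_mul_left_Ioi (fun s ↦ gaussianDefect s⁻¹) 0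
      (inv_pos.mpr hr), mul_zero, inv_inv, smul_eq_mul, mul_comm, subordinationConst]

section Subordination

variable {α E : Type*} [MeasurableSpace α] [NormedAddCommGroup E] [NormedSpace ℝ E]
  {μ : Measure α} {r : α → ℝ} {h : α → E}

lemma integrable_gaussianDefect_div_smul (hr : Measurable r) (hr₀ : ∀ a, 0 ≤ r a)
    (hh : AEStronglyMeasurable h μ) (hrh : Integrable (fun a ↦ r a • h a) μ) :
    Integrable (fun p : α × ℝ ↦ gaussianDefect (r p.1 / p.2) • h p.1)
      (μ.prod (volume.restrict (Ioi 0))) := by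
  have hmeas : Measurable fun p : α × ℝ ↦ gaussianDefect (r p.1 / p.2) :=
    continuous_gaussianDefect.measurable.comp ((hr.comp measurable_fst).div measurable_snd)
  have hsm : AEStronglyMeasurable (fun p : α × ℝ ↦ gaussianDefect (r p.1 / p.2) • h p.1)
      (μ.prod (volume.restrict (Ioi 0))) := hmeas.aestronglyMeasurable.smul hh.comp_fst
  rw [integrable_prod_iff hsm]
  refine ⟨.of_forall fun a ↦ (integrableOn_gaussianDefect_div (hr₀ a)).smul_const (h a), ?_⟩
  simp only [norm_smul, norm_gaussianDefect, integral_mul_const,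
    integral_gaussianDefect_div (hr₀ _), mul_assoc]
  simpa only [norm_smul, Real.norm_of_nonneg (hr₀ _)] using hrh.norm.const_mul subordinationConst

lemma integral_gaussianDefect_div_smul [CompleteSpace E] [SFinite μ] (hr : Measurable r)
    (hr₀ : ∀ a, 0 ≤ r a) (hh : AEStronglyMeasurable h μ) (hrh : Integrable (fun a ↦ r a • h a) μ) :
    ∫ s in Ioi 0, ∫ a, gaussianDefect (r a / s) • h a ∂μ =
      subordinationConst • ∫ a, r a • h a ∂μ := by
  calc ∫ s in Ioi 0, ∫ a, gaussianDefect (r a / s) • h a ∂μ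
      = ∫ a, (∫ s in Ioi 0, gaussianDefect (r a / s) • h a) ∂μ :=
        (integral_integral_swap (integrable_gaussianDefect_div_smul hr hr₀ hh hrh)).symm
    _ = ∫ a, subordinationConst • r a • h a ∂μ := by
        simp only [integral_smul_const, integral_gaussianDefect_div (hr₀ _), mul_smul]
    _ = subordinationConst • ∫ a, r a • h a ∂μ := integral_smul _ _

end Subordination

/-- The radial profile of the `n`-dimensional heat kernel: `heatProfile n s ‖y‖` is the Fourier
transform of `exp(-(‖ξ‖ / s)²)`, so that `s⁻²` plays the role of time. -/
def heatProfile (n : ℕ) (s ρ : ℝ) : ℝ := (√π * s) ^ n * rexp (-(π * s * ρ) ^ 2)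

lemma heatProfile_nonneg (n : ℕ) {s : ℝ} (hs : 0 ≤ s) (ρ : ℝ) : 0 ≤ heatProfile n s ρ := by
  unfold heatProfile
  positivity

lemma heatProfile_anti (n : ℕ) {s ρ ρ' : ℝ} (hs : 0 ≤ s) (hρ : 0 ≤ ρ) (h : ρ ≤ ρ') :
    heatProfile n s ρ' ≤ heatProfile n s ρ := by
  unfold heatProfile
  gcongr

lemma heatProfile_eq_mul {ρ : ℝ} (hρ : ρ ≠ 0) (n : ℕ) (s : ℝ) :
    heatProfile n s ρ = (ρ ^ n)⁻¹ * heatProfile n (ρ * s) 1 := by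
  unfold heatProfile
  rw [show √π * (ρ * s) = ρ * (√π * s) by ring, mul_pow ρ, mul_assoc (ρ ^ n),
    inv_mul_cancel_left₀ (pow_ne_zero n hρ)]
  ring_nf

lemma integrableOn_heatProfile_one (n : ℕ) :
    IntegrableOn (fun s ↦ heatProfile n s 1) (Ioi 0) := by
  have hmoment : IntegrableOn (fun s : ℝ ↦ s ^ (n : ℝ) * rexp (-π ^ 2 * s ^ 2)) (Ioi 0) :=
    integrableOn_rpow_mul_exp_neg_mul_sq (by positivity) (by linarith [n.cast_nonneg (α := ℝ)])
  refine IntegrableOn.congr_fun (hmoment.const_mul (√π ^ n)) (fun s _ ↦ ?_) measurableSet_Ioi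
  simp only [heatProfile, rpow_natCast]
  ring_nf

lemma integrableOn_heatProfile (n : ℕ) {ρ : ℝ} (hρ : 0 < ρ) :
    IntegrableOn (fun s ↦ heatProfile n s ρ) (Ioi 0) := by
  have hdilate : IntegrableOn (fun s ↦ heatProfile n (ρ * s) 1) (Ioi 0) := by
    rw [integrableOn_Ioi_comp_mul_left_iff (fun s ↦ heatProfile n s 1) 0 hρ, mul_zero]
    exact integrableOn_heatProfile_one n
  simp only [heatProfile_eq_mul hρ.ne']
  exact hdilate.const_mul _

lemma integral_heatProfile (n : ℕ) {ρ : ℝ} (hρ : 0 < ρ) :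
    ∫ s in Ioi 0, heatProfile n s ρ = (ρ ^ (n + 1))⁻¹ * ∫ s in Ioi 0, heatProfile n s 1 := by
  simp only [heatProfile_eq_mul hρ.ne' n _]
  rw [integral_const_mul, integral_comp_mul_left_Ioi (fun s ↦ heatProfile n s 1) 0 hρ, mul_zero,
    smul_eq_mul, ← mul_assoc, ← mul_inv, ← pow_succ]

lemma exists_bound_one_add_norm_rpow {F : Type*} [SeminormedAddGroup F] {u : F → ℝ} {A B r p : ℝ}
    (hp : 0 ≤ p) (hA : ∀ x, u x ≤ A)
    (hB : ∀ x, r < ‖x‖ → u x ≤ B * (1 + ‖x‖) ^ (-p)) :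
    ∃ C, 0 < C ∧ ∀ x, u x ≤ C * (1 + ‖x‖) ^ (-p) := by
  refine ⟨max 1 (max (|A| * (1 + r) ^ p) B), by positivity, fun x ↦ ?_⟩
  rcases le_or_gt ‖x‖ r with hx | hx
  · calc u x ≤ |A| * (1 + ‖x‖) ^ p * (1 + ‖x‖) ^ (-p) := by
          rw [mul_assoc, ← rpow_add (by positivity), add_neg_cancel, rpow_zero, mul_one]
          exact (hA x).trans (le_abs_self A)
      _ ≤ |A| * (1 + r) ^ p * (1 + ‖x‖) ^ (-p) := by gcongr
      _ ≤ _ := by gcongr; simp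
  · exact (hB x hx).trans (by gcongr; simp)

section Multiplier

open Module

variable {V E : Type*} [NormedAddCommGroup V] [InnerProductSpace ℝ V] [FiniteDimensional ℝ V]
  [MeasurableSpace V] [BorelSpace V] [NormedAddCommGroup E] [NormedSpace ℂ E] {f : V → E}

/-- The operator `(-Δ)^{1/2}` on vector-valued functions, as the Fourier multiplier with
symbol `‖ξ‖`. Since `𝓕` has kernel `exp(-2πi⟪y, ξ⟫)`, this is `(2π)⁻¹` times the square root of
the positive Laplacian. -/
def sqrtLaplacian (f : V → E) (x : V) : E := 𝓕⁻ (fun ξ ↦ ‖ξ‖ • 𝓕 f ξ) x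

lemma norm_fourierInv_le_integral_norm (g : V → E) (x : V) : ‖𝓕⁻ g x‖ ≤ ∫ ξ, ‖g ξ‖ := by
  rw [fourierInv_eq]
  exact (norm_integral_le_integral_norm _).trans_eq (by simp only [Circle.norm_smul])

lemma integrable_fourierChar_smul {g : V → E} (hg : Integrable g) (x : V) :
    Integrable fun ξ ↦ 𝐞 (inner ℝ ξ x) • g ξ := by
  simpa using (fourierIntegral_convergent_iff (-x)).mpr hg

lemma fourierInv_sub {g h : V → E} (hg : Integrable g) (hh : Integrable h) (x : V) :
    𝓕⁻ (fun ξ ↦ g ξ - h ξ) x = 𝓕⁻ g x - 𝓕⁻ h x := by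
  simp only [fourierInv_eq, smul_sub]
  exact integral_sub (integrable_fourierChar_smul hg x) (integrable_fourierChar_smul hh x)

lemma continuous_fourier (hf : Integrable f) : Continuous (𝓕 f) :=
  VectorFourier.fourierIntegral_continuous continuous_fourierChar continuous_inner hf

lemma norm_sqrtLaplacian_le_integral (f : V → E) (x : V) :
    ‖sqrtLaplacian f x‖ ≤ ∫ ξ, ‖ξ‖ * ‖𝓕 f ξ‖ := by
  simpa [norm_smul, sqrtLaplacian] using norm_fourierInv_le_integral_norm (fun ξ ↦ ‖ξ‖ • 𝓕 f ξ) x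

lemma integrable_norm_smul_fourier (hf : ContDiff ℝ (⊤ : ℕ∞) f) (hsupp : HasCompactSupport f) :
    Integrable fun ξ ↦ ‖ξ‖ • 𝓕 f ξ := by
  have hcont := continuous_fourier (hf.continuous.integrable_of_hasCompactSupport hsupp)
  have h := (𝓕 (hsupp.toSchwartzMap hf)).integrable_pow_mul volume 1
  rw [SchwartzMap.fourier_coe] at h
  refine h.mono' (by fun_prop) (.of_forall fun ξ ↦ ?_)
  rw [norm_smul, norm_norm, pow_one]
  rfl

lemma integrable_of_integrable_norm_smul {g : V → E} (hg : Continuous g)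
    (h : Integrable fun ξ ↦ ‖ξ‖ • g ξ) : Integrable g := by
  refine integrable_iff_integrableAtFilter_cocompact.mpr ⟨?_, hg.locallyIntegrable⟩
  refine ⟨(closedBall 0 1)ᶜ, (isCompact_closedBall 0 1).compl_mem_cocompact, ?_⟩
  refine h.norm.integrableOn.mono' hg.aestronglyMeasurable ?_
  filter_upwards [ae_restrict_mem measurableSet_closedBall.compl] with ξ hξ
  have hξ : 1 ≤ ‖ξ‖ := by simpa using (not_le.mp (by simpa using hξ)).le
  simpa [norm_smul] using le_mul_of_one_le_left (norm_nonneg (g ξ)) hξ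

lemma fourier_gaussian_eq_heatProfile {s : ℝ} (hs : 0 < s) (x y : V) :
    𝓕 (fun ξ : V ↦ Complex.exp (-(s ^ 2 : ℂ)⁻¹ * ‖ξ‖ ^ 2 +
      2 * π * Complex.I * inner ℝ x ξ)) y = heatProfile (finrank ℝ V) s ‖x - y‖ := by
  have hroot : (π / (s ^ 2 : ℂ)⁻¹) ^ (finrank ℝ V / 2 : ℂ) = ((√π * s) ^ finrank ℝ V : ℝ) := by
    have hreal : ((√π * s) ^ 2) ^ ((finrank ℝ V : ℝ) / 2) = (√π * s) ^ finrank ℝ V := by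
      rw [← rpow_natCast_mul (by positivity), Nat.cast_ofNat,
        mul_div_cancel₀ _ two_ne_zero, rpow_natCast]
    rw [← hreal, Complex.ofReal_cpow (by positivity), mul_pow, sq_sqrt pi_nonneg]
    push_cast
    rw [div_inv_eq_mul]
  rw [fourier_gaussian_innerProductSpace' (by norm_cast; positivity), hroot, heatProfile]
  push_cast
  congr 2
  field_simp

variable [CompleteSpace E]

lemma fourierInv_gaussian_smul_fourier (hf : Integrable f) {s : ℝ} (hs : 0 < s) (x : V) :
    𝓕⁻ (fun ξ ↦ rexp (-(‖ξ‖ / s) ^ 2) • 𝓕 f ξ) x =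
      ∫ y, heatProfile (finrank ℝ V) s ‖x - y‖ • f y := by
  set γ : V → ℂ := fun ξ ↦
    Complex.exp (-(s ^ 2 : ℂ)⁻¹ * ‖ξ‖ ^ 2 + 2 * π * Complex.I * inner ℝ x ξ) with hγ_def
  have hγ : Integrable γ :=
    GaussianFourier.integrable_cexp_neg_mul_sq_norm_add (by norm_cast; positivity) _ x
  calc 𝓕⁻ (fun ξ ↦ rexp (-(‖ξ‖ / s) ^ 2) • 𝓕 f ξ) x
      = ∫ ξ, γ ξ • 𝓕 f ξ := by
        rw [fourierInv_eq']
        congr! 2 with ξ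
        rw [← Complex.coe_smul, smul_smul, Complex.ofReal_exp, ← Complex.exp_add, hγ_def,
          real_inner_comm]
        congr 2
        push_cast
        field_simp
        ring
    _ = ∫ y, 𝓕 γ y • f y := by
        simpa using! (VectorFourier.integral_fourierIntegral_smul_eq_flip (L := innerₗ V)
          continuous_fourierChar continuous_inner hγ hf).symm
    _ = ∫ y, heatProfile (finrank ℝ V) s ‖x - y‖ • f y := by
        simp only [hγ_def, fourier_gaussian_eq_heatProfile hs, Complex.coe_smul]

lemma fourierInv_gaussianDefect_smul_fourier (hf : Integrable f) (hcont : Continuous f)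
    (hF : Integrable (𝓕 f)) {s : ℝ} (hs : 0 < s) (x : V) :
    𝓕⁻ (fun ξ ↦ gaussianDefect (‖ξ‖ / s) • 𝓕 f ξ) x =
      f x - ∫ y, heatProfile (finrank ℝ V) s ‖x - y‖ • f y := by
  have hgauss : Integrable fun ξ ↦ rexp (-(‖ξ‖ / s) ^ 2) • 𝓕 f ξ :=
    hF.bdd_smul (𝕜 := ℝ) 1 (Continuous.aestronglyMeasurable (by fun_prop))
      (.of_forall fun ξ ↦ by simp [sq_nonneg])
  simp only [gaussianDefect, sub_smul, one_smul]
  rw [fourierInv_sub hF hgauss, hcont.fourierInv_fourier_eq hf hF,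
    fourierInv_gaussian_smul_fourier hf hs]

lemma subordinationConst_smul_sqrtLaplacian (hf : Integrable f) (hcont : Continuous f)
    (hF : Integrable fun ξ ↦ ‖ξ‖ • 𝓕 f ξ) (x : V) :
    subordinationConst • sqrtLaplacian f x =
      ∫ s in Ioi 0, (f x - ∫ y, heatProfile (finrank ℝ V) s ‖x - y‖ • f y) := by
  have hF₁ : Integrable (𝓕 f) := integrable_of_integrable_norm_smul (continuous_fourier hf) hF
  have hsub := integral_gaussianDefect_div_smul measurable_norm norm_nonneg
    (integrable_fourierChar_smul hF₁ x).aestronglyMeasurable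
    (by simpa only [smul_comm ‖_‖] using integrable_fourierChar_smul hF x)
  calc subordinationConst • sqrtLaplacian f x
      = subordinationConst • ∫ ξ, ‖ξ‖ • 𝐞 (inner ℝ ξ x) • 𝓕 f ξ := by
        simp only [sqrtLaplacian, fourierInv_eq, smul_comm ‖_‖]
    _ = ∫ s in Ioi 0, 𝓕⁻ (fun ξ ↦ gaussianDefect (‖ξ‖ / s) • 𝓕 f ξ) x := by
        simp only [← hsub, fourierInv_eq, smul_comm (gaussianDefect _)]
    _ = ∫ s in Ioi 0, (f x - ∫ y, heatProfile (finrank ℝ V) s ‖x - y‖ • f y) :=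
        setIntegral_congr_fun measurableSet_Ioi fun s hs ↦
          fourierInv_gaussianDefect_smul_fourier hf hcont hF₁ hs x

lemma norm_sqrtLaplacian_le_of_forall_eq_zero (hf : Integrable f) (hcont : Continuous f)
    (hF : Integrable fun ξ ↦ ‖ξ‖ • 𝓕 f ξ) {ρ : ℝ} (hρ : 0 < ρ) {x : V}
    (hx : ∀ y, ‖x - y‖ < ρ → f y = 0) :
    ‖sqrtLaplacian f x‖ ≤ subordinationConst⁻¹ *
      (∫ s in Ioi 0, heatProfile (finrank ℝ V) s 1) * (∫ y, ‖f y‖) * (ρ ^ (finrank ℝ V + 1))⁻¹ := by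
  have hheat : ∀ s > 0, ‖∫ y, heatProfile (finrank ℝ V) s ‖x - y‖ • f y‖ ≤
      heatProfile (finrank ℝ V) s ρ * ∫ y, ‖f y‖ := by
    intro s hs
    rw [← integral_const_mul]
    refine norm_integral_le_of_norm_le (hf.norm.const_mul _) (.of_forall fun y ↦ ?_)
    rcases lt_or_ge ‖x - y‖ ρ with hy | hy
    · simp [hx y hy]
    · rw [norm_smul, Real.norm_of_nonneg (heatProfile_nonneg _ hs.le _)]
      gcongr
      exact heatProfile_anti _ hs.le hρ.le hy
  have hfx : f x = 0 := hx x (by simpa using hρ)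
  have hbound : ‖subordinationConst • sqrtLaplacian f x‖ ≤
      ∫ s in Ioi 0, heatProfile (finrank ℝ V) s ρ * ∫ y, ‖f y‖ := by
    rw [subordinationConst_smul_sqrtLaplacian hf hcont hF]
    refine norm_integral_le_of_norm_le ((integrableOn_heatProfile _ hρ).mul_const _) ?_
    filter_upwards [ae_restrict_mem measurableSet_Ioi] with s hs
    simpa [hfx] using hheat s hs
  rw [norm_smul, Real.norm_of_nonneg subordinationConst_pos.le, integral_mul_const,
    integral_heatProfile _ hρ] at hbound
  rw [mul_assoc, mul_assoc, le_inv_mul_iff₀ subordinationConst_pos]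
  exact hbound.trans_eq (by ring)

theorem halfLaplacian_decay_general (hcont : Continuous f) (hsupp : HasCompactSupport f)
    (hF : Integrable fun ξ ↦ ‖ξ‖ • 𝓕 f ξ) :
    ∃ C : ℝ, 0 < C ∧ ∀ x, ‖sqrtLaplacian f x‖ ≤ C * (1 + ‖x‖) ^ (-(finrank ℝ V : ℝ) - 1) := by
  obtain ⟨R, hR⟩ := hsupp.isCompact.isBounded.exists_norm_le
  have hf : Integrable f := hcont.integrable_of_hasCompactSupport hsupp
  have hfar : ∀ x y, 2 * R + 1 < ‖x‖ → ‖x - y‖ < (1 + ‖x‖) / 2 → f y = 0 := by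
    intro x y hx hxy
    refine image_eq_zero_of_notMem_tsupport fun hy ↦ ?_
    linarith [hR y hy, norm_sub_norm_le x y]
  set M := subordinationConst⁻¹ * (∫ s in Ioi 0, heatProfile (finrank ℝ V) s 1) * ∫ y, ‖f y‖
  have hdecay : ∀ x, 2 * R + 1 < ‖x‖ →
      ‖sqrtLaplacian f x‖ ≤ M * 2 ^ (finrank ℝ V + 1) * (1 + ‖x‖) ^ (-((finrank ℝ V : ℝ) + 1)) := by
    intro x hx
    calc ‖sqrtLaplacian f x‖ ≤ M * (((1 + ‖x‖) / 2) ^ (finrank ℝ V + 1))⁻¹ :=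
          norm_sqrtLaplacian_le_of_forall_eq_zero hf hcont hF (by positivity) (hfar x · hx)
      _ = M * 2 ^ (finrank ℝ V + 1) * (1 + ‖x‖) ^ (-((finrank ℝ V : ℝ) + 1)) := by
          rw [rpow_neg (by positivity), ← Nat.cast_add_one, rpow_natCast, div_pow, inv_div,
            div_eq_mul_inv, ← mul_assoc]
  rw [← neg_add']
  exact exists_bound_one_add_norm_rpow (by positivity) (norm_sqrtLaplacian_le_integral f) hdecay

end Multiplier

/-- pointwise decay `|(-Δ)^{1/2}φ(x)| ≤ C(1+|x|)^{-d-1}`. -/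
theorem halfLaplacian_decay (d : ℕ) (hd : 2 ≤ d) (φ : EuclideanSpace ℝ (Fin d) → ℝ)
    (hφ : ContDiff ℝ (⊤ : ℕ∞) φ) (hsupp : HasCompactSupport φ) :
    ∃ C : ℝ, 0 < C ∧ ∀ x : EuclideanSpace ℝ (Fin d),
      |halfLaplacian d φ x| ≤ C * (1 + ‖x‖) ^ (-(d : ℝ) - 1) := by
  have hdiff : ContDiff ℝ (⊤ : ℕ∞) fun y ↦ (φ y : ℂ) := Complex.ofRealCLM.contDiff.comp hφ
  have hcompact : HasCompactSupport fun y ↦ (φ y : ℂ) := hsupp.comp_left Complex.ofReal_zero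
  obtain ⟨C, hC, hbound⟩ := halfLaplacian_decay_general hdiff.continuous hcompact
    (integrable_norm_smul_fourier hdiff hcompact)
  exact ⟨C, hC, fun x ↦ (Complex.abs_re_le_norm _).trans
    (by simpa [sqrtLaplacian] using hbound x)⟩
end
end

section
/- Gustin's boxing inequality: if ω is an open bounded subset of ℝ^d (d ≥ 2) with smooth boundary, then H^{d-1}_∞(ω) ≤ C·H^{d-1}(∂ω), where C depends only on d. -/
open MeasureTheory Real Metric Set
open scoped FourierTransform ENNReal
noncomputable section

/-!
In the sup norm of `ℝⁿ⁺¹`, balls are cubes. Let `Q` be a cube of side `ℓ`, and join a point of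
`Q ∩ A` to a point of `Q \ A` by moving one coordinate at a time: on some step the path meets
`frontier A`, so an intermediate point lies in a coordinate cylinder over a projection of
`frontier A ∩ Q`. Exchanging coordinates between two points preserves Lebesgue measure, hence
`|Q ∩ A| |Q \ A| ≤ (n + 1) ℓ |Q| Hⁿ(frontier A ∩ Q)`. Around each interior point of a set of
finite volume, some cube is exactly half filled by the set; for that cube the inequality bounds
`ℓⁿ` by a multiple of `Hⁿ(frontier A ∩ Q)`. A disjoint Vitali subfamily of these cubes still
covers after enlargement by a factor of five, and equivalence of norms turns cubes into balls.
-/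

section Exchange

variable {ι α : Type*}

/-- The map on pairs of points of `ι → α` that exchanges the coordinates indexed by `s` and keeps
the others; its first component is the hybrid point used to join the two points along
coordinate directions. -/
def exchange [DecidableEq ι] (s : Finset ι) (p : (ι → α) × (ι → α)) : (ι → α) × (ι → α) :=
  (s.piecewise p.2 p.1, s.piecewise p.1 p.2)

lemma measurePreserving_exchange [DecidableEq ι] [Fintype ι] [MeasurableSpace α] (s : Finset ι)
    (μ : ι → Measure α) [∀ i, SigmaFinite (μ i)] :
    MeasurePreserving (exchange s) ((Measure.pi μ).prod (Measure.pi μ))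
      ((Measure.pi μ).prod (Measure.pi μ)) := by
  have split := measurePreserving_arrowProdEquivProdArrow α α ι μ μ
  have swap : MeasurePreserving (fun (q : ι → α × α) i => (if i ∈ s then Prod.swap else id) (q i))
      (Measure.pi fun i => (μ i).prod (μ i)) (Measure.pi fun i => (μ i).prod (μ i)) := by
    refine measurePreserving_pi _ _ fun i => ?_
    split_ifs
    · exact Measure.measurePreserving_swap
    · exact .id _
  convert split.comp (swap.comp split.symm) using 1
  ext ⟨x, y⟩ i <;> by_cases hi : i ∈ s <;>
    simp [exchange, hi, MeasurableEquiv.arrowProdEquivProdArrow, Equiv.arrowProdEquivProdArrow]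

end Exchange

lemma exists_Iio_and_not_Iic {n : ℕ} {p : Finset (Fin (n + 1)) → Prop} (h_empty : p ∅)
    (h_univ : ¬ p Finset.univ) : ∃ i, p (Finset.Iio i) ∧ ¬ p (Finset.Iic i) := by
  by_contra! step
  have all : ∀ i, p (Finset.Iic i) := by
    intro i
    induction i using Fin.induction with
    | zero => exact step 0 ((Finset.Iio_bot (α := Fin (n + 1))).symm ▸ h_empty)
    | succ i ih =>
      refine step _ ?_
      convert ih using 1
      ext j
      simp [Fin.lt_def, Fin.le_def]
  refine h_univ ?_
  convert all (Fin.last n) using 1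
  ext j
  simp [Fin.le_last]

lemma inter_frontier_nonempty_of_isPreconnected {X : Type*} [TopologicalSpace X] {s A : Set X}
    (hs : IsPreconnected s) (h_in : (s ∩ A).Nonempty) (h_out : (s \ A).Nonempty) :
    (s ∩ frontier A).Nonempty := by
  by_contra! h
  have avoid : ∀ z ∈ s, z ∈ closure A → z ∈ interior A := fun z hz hzA => by
    by_contra hzi
    exact h.subset ⟨hz, hzA, hzi⟩
  obtain ⟨x, hxs, hxA⟩ := h_in
  obtain ⟨y, hys, hyA⟩ := h_out
  obtain ⟨z, -, hz_int, hz_ext⟩ := hs (interior A) (closure A)ᶜ isOpen_interior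
    isClosed_closure.isOpen_compl (fun z hz => (em (z ∈ closure A)).imp_left (avoid z hz))
    ⟨x, hxs, avoid x hxs (subset_closure hxA)⟩
    ⟨y, hys, fun hy => hyA (interior_subset (avoid y hys hy))⟩
  exact hz_ext (interior_subset_closure hz_int)

lemma piecewise_mem_closedBall {ι : Type*} [Fintype ι] [DecidableEq ι] {c x y : ι → ℝ}
    {r : ℝ} (hr : 0 ≤ r) (hx : x ∈ closedBall c r) (hy : y ∈ closedBall c r)
    (s : Finset ι) :
    s.piecewise x y ∈ closedBall c r := by
  rw [closedBall_pi c hr] at *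
  exact s.piecewise_mem_set_pi hx hy

section RelativeIsoperimetric

variable {n : ℕ} (c : Fin (n + 1) → ℝ) (r : ℝ)

/-- The cylinder over `P` in the `i`-th coordinate direction, of the same height as
`closedBall c r`. -/
def slab (i : Fin (n + 1)) (P : Set (Fin n → ℝ)) : Set (Fin (n + 1) → ℝ) :=
  {z | z i ∈ closedBall (c i) r ∧ i.removeNth z ∈ P}

lemma measurableSet_slab (i : Fin (n + 1)) {P : Set (Fin n → ℝ)} (hP : MeasurableSet P) :
    MeasurableSet (slab c r i P) :=
  (MeasurableEquiv.piFinSuccAbove (fun _ => ℝ) i).measurable (measurableSet_closedBall.prod hP)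

lemma volume_slab (i : Fin (n + 1)) {P : Set (Fin n → ℝ)} (hP : MeasurableSet P) :
    volume (slab c r i P) = ENNReal.ofReal (2 * r) * volume P := by
  change volume (MeasurableEquiv.piFinSuccAbove (fun _ => ℝ) i ⁻¹' (closedBall (c i) r ×ˢ P)) = _
  rw [(volume_preserving_piFinSuccAbove (fun _ => ℝ) i).measure_preimage
    (measurableSet_closedBall.prod hP).nullMeasurableSet, Measure.volume_eq_prod,
    Measure.prod_prod, Real.volume_closedBall]

lemma lipschitzWith_removeNth {α : Type*} [PseudoEMetricSpace α] (i : Fin (n + 1)) :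
    LipschitzWith 1 (i.removeNth : (Fin (n + 1) → α) → Fin n → α) :=
  LipschitzWith.of_edist_le fun x y => edist_pi_le_iff.2 fun _ => edist_le_pi_edist x y _

lemma volume_image_removeNth_le (i : Fin (n + 1)) (F : Set (Fin (n + 1) → ℝ)) :
    volume (i.removeNth '' F : Set (Fin n → ℝ)) ≤ μH[n] F := by
  rw [← hausdorffMeasure_pi_real, Fintype.card_fin]
  simpa using (lipschitzWith_removeNth i).hausdorffMeasure_image_le n.cast_nonneg F

variable {c r}

lemma exists_exchange_mem_slab {A : Set (Fin (n + 1) → ℝ)} {x y : Fin (n + 1) → ℝ} (hr : 0 ≤ r)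
    (hx : x ∈ closedBall c r ∩ A) (hy : y ∈ closedBall c r \ A) :
    ∃ i : Fin (n + 1), exchange (Finset.Iio i) (x, y) ∈
      slab c r i (i.removeNth '' (frontier A ∩ closedBall c r)) ×ˢ closedBall c r := by
  obtain ⟨i, hiA, hiA'⟩ := exists_Iio_and_not_Iic (p := fun s => s.piecewise y x ∈ A)
    (by simpa using hx.2) (by simpa using hy.2)
  have hybrid_mem (s : Finset (Fin (n + 1))) : s.piecewise y x ∈ closedBall c r :=
    piecewise_mem_closedBall hr hy.1 hx.1 s
  obtain ⟨w, hw, hwA⟩ := inter_frontier_nonempty_of_isPreconnected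
    (convex_segment ((Finset.Iio i).piecewise y x) ((Finset.Iic i).piecewise y x)).isPreconnected
    ⟨_, left_mem_segment .., hiA⟩ ⟨_, right_mem_segment .., hiA'⟩
  refine ⟨i, ⟨(dist_le_pi_dist _ c i).trans (hybrid_mem _), w, ⟨hwA, ?_⟩, ?_⟩,
    piecewise_mem_closedBall hr hx.1 hy.1 _⟩
  · exact (convex_closedBall c r).segment_subset (hybrid_mem _) (hybrid_mem _) hw
  · obtain ⟨a, b, -, -, hab, rfl⟩ := hw
    ext j
    have hj : (i.succAbove j ≤ i) = (i.succAbove j < i) :=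
      propext (Fin.succAbove_ne i j).le_iff_lt
    simp only [Fin.removeNth, exchange, Finset.piecewise, Finset.mem_Iio, Finset.mem_Iic,
      Pi.add_apply, Pi.smul_apply, smul_eq_mul, hj, ← add_mul, hab, one_mul]

theorem volume_inter_mul_volume_diff_le (A : Set (Fin (n + 1) → ℝ)) (hr : 0 ≤ r) :
    volume (closedBall c r ∩ A) * volume (closedBall c r \ A) ≤
      (n + 1) * (ENNReal.ofReal (2 * r) * μH[n] (frontier A ∩ closedBall c r) *
        volume (closedBall c r)) := by
  set Q := closedBall c r
  let S (i : Fin (n + 1)) := slab c r i (i.removeNth '' (frontier A ∩ Q))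
  have shadow_measurable (i : Fin (n + 1)) :
      MeasurableSet (i.removeNth '' (frontier A ∩ Q) : Set (Fin n → ℝ)) :=
    (((isCompact_closedBall c r).inter_left isClosed_frontier).image
      (lipschitzWith_removeNth i).continuous).measurableSet
  have cover : (Q ∩ A) ×ˢ (Q \ A) ⊆ ⋃ i, exchange (Finset.Iio i) ⁻¹' (S i ×ˢ Q) :=
    fun _ hp => mem_iUnion.2 (exists_exchange_mem_slab hr hp.1 hp.2)
  have piece (i : Fin (n + 1)) :
      (volume.prod volume) (exchange (Finset.Iio i) ⁻¹' (S i ×ˢ Q)) ≤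
        ENNReal.ofReal (2 * r) * μH[n] (frontier A ∩ Q) * volume Q := by
    have hS : MeasurableSet (S i ×ˢ Q) :=
      (measurableSet_slab c r i (shadow_measurable i)).prod measurableSet_closedBall
    rw [volume_pi, (measurePreserving_exchange _ _).measure_preimage hS.nullMeasurableSet,
      ← volume_pi, Measure.prod_prod, volume_slab c r i (shadow_measurable i)]
    gcongr
    exact volume_image_removeNth_le i _
  calc volume (Q ∩ A) * volume (Q \ A)
      = (volume.prod volume) ((Q ∩ A) ×ˢ (Q \ A)) := (Measure.prod_prod _ _).symm
    _ ≤ ∑ i, (volume.prod volume) (exchange (Finset.Iio i) ⁻¹' (S i ×ˢ Q)) :=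
        (measure_mono cover).trans (measure_iUnion_fintype_le _ _)
    _ ≤ ∑ _ : Fin (n + 1), ENNReal.ofReal (2 * r) * μH[n] (frontier A ∩ Q) * volume Q :=
        Finset.sum_le_sum fun i _ => piece i
    _ = _ := by simp

theorem ofReal_pow_le_hausdorffMeasure_frontier {A : Set (Fin (n + 1) → ℝ)} (hr : 0 < r)
    (half : volume (closedBall c r ∩ A) = volume (closedBall c r) / 2) :
    ENNReal.ofReal (2 * r) ^ n ≤ 4 * (n + 1) * μH[n] (frontier A ∩ closedBall c r) := by
  set V := volume (closedBall c r)
  set ℓ := ENNReal.ofReal (2 * r)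
  set H := μH[n] (frontier A ∩ closedBall c r)
  have hℓ : ℓ ≠ 0 := by simpa [ℓ] using hr
  have hV : V = ℓ ^ n * ℓ := by
    rw [← pow_succ, ← ENNReal.ofReal_pow (by positivity), ← Fintype.card_fin (n + 1)]
    exact Real.volume_pi_closedBall c hr.le
  have hV_top : V ≠ ⊤ := measure_closedBall_lt_top.ne
  have hV_zero : V ≠ 0 := (measure_closedBall_pos volume c hr).ne'
  have half_diff : V / 2 ≤ volume (closedBall c r \ A) := by
    rw [← sdiff_self_inter]
    exact (ENNReal.sub_half hV_top).symm.trans_le (half ▸ le_measure_sdiff)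
  have isop : V / 2 * (V / 2) ≤ (n + 1) * (ℓ * H * V) := by
    refine le_trans ?_ (volume_inter_mul_volume_diff_le A hr.le)
    rw [half]
    gcongr
  refine (ENNReal.mul_le_mul_iff_left (mul_ne_zero hℓ hV_zero)
    (ENNReal.mul_ne_top ENNReal.ofReal_ne_top hV_top)).1 ?_
  calc ℓ ^ n * (ℓ * V) = 2 * (V / 2) * (2 * (V / 2)) := by
        rw [ENNReal.mul_div_cancel two_ne_zero ENNReal.ofNat_ne_top, ← mul_assoc, ← hV]
    _ = 4 * (V / 2 * (V / 2)) := by ring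
    _ ≤ 4 * ((n + 1) * (ℓ * H * V)) := by gcongr
    _ = 4 * (n + 1) * H * (ℓ * V) := by ring

end RelativeIsoperimetric

section HalfBall

open Filter

lemma continuousOn_measureReal_closedBall_inter {X : Type*} [PseudoMetricSpace X]
    [MeasurableSpace X] [OpensMeasurableSpace X] {μ : Measure X} {x : X} {I : Set ℝ}
    (h_fin : ∀ r, μ (closedBall x r) ≠ ⊤)
    (h : ContinuousOn (fun r => μ.real (closedBall x r)) I) (A : Set X) :
    ContinuousOn (fun r => μ.real (closedBall x r ∩ A)) I := by
  have growth {r s : ℝ} (hrs : r ≤ s) :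
      |μ.real (closedBall x s ∩ A) - μ.real (closedBall x r ∩ A)| ≤
        |μ.real (closedBall x s) - μ.real (closedBall x r)| := by
    have hsub : closedBall x r ⊆ closedBall x s := closedBall_subset_closedBall hrs
    rw [abs_of_nonneg (sub_nonneg.2 (measureReal_mono (inter_subset_inter_left A hsub)
        (measure_ne_top_of_subset inter_subset_left (h_fin s)))),
      abs_of_nonneg (sub_nonneg.2 (measureReal_mono hsub (h_fin s))),
      ← measureReal_sdiff hsub measurableSet_closedBall (h_fin s), sub_le_iff_le_add]
    calc μ.real (closedBall x s ∩ A)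
        ≤ μ.real ((closedBall x s \ closedBall x r) ∪ (closedBall x r ∩ A)) := by
          refine measureReal_mono (fun z hz => ?_) (measure_ne_top_of_subset
            (union_subset sdiff_subset (inter_subset_left.trans hsub)) (h_fin s))
          by_cases hzr : z ∈ closedBall x r
          exacts [Or.inr ⟨hzr, hz.2⟩, Or.inl ⟨hz.1, hzr⟩]
      _ ≤ _ := measureReal_union_le _ _
  have growth_dist (s r : ℝ) :
      dist (μ.real (closedBall x s ∩ A)) (μ.real (closedBall x r ∩ A)) ≤
        dist (μ.real (closedBall x s)) (μ.real (closedBall x r)) := by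
    rcases le_total r s with hrs | hsr
    · exact growth hrs
    · rw [dist_comm, dist_comm (μ.real (closedBall x s))]
      exact growth hsr
  exact fun r hr => tendsto_iff_dist_tendsto_zero.2 <| squeeze_zero (fun _ => dist_nonneg)
    (fun s => growth_dist s r) (tendsto_iff_dist_tendsto_zero.1 (h r hr))

variable {E : Type*} [NormedAddCommGroup E] [NormedSpace ℝ E] [FiniteDimensional ℝ E]
  [MeasurableSpace E] [BorelSpace E] (μ : Measure E) [μ.IsAddHaarMeasure]

lemma continuousOn_measureReal_closedBall (x : E) :
    ContinuousOn (fun r => μ.real (closedBall x r)) (Ici 0) :=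
  ContinuousOn.congr (by fun_prop) fun _ hr => μ.addHaar_real_closedBall x hr

lemma tendsto_measureReal_closedBall_atTop [Nontrivial E] (x : E) :
    Tendsto (fun r => μ.real (closedBall x r)) atTop atTop := by
  have h_ball : 0 < μ.real (ball (0 : E) 1) :=
    ENNReal.toReal_pos (measure_ball_pos μ 0 one_pos).ne' measure_ball_lt_top.ne
  refine ((tendsto_pow_atTop (Module.finrank_pos (R := ℝ) (M := E)).ne').atTop_mul_const
    h_ball).congr' ?_
  filter_upwards [eventually_ge_atTop 0] with r hr
  exact (μ.addHaar_real_closedBall x hr).symm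

theorem exists_measure_closedBall_inter_eq_half [Nontrivial E] {A : Set E} (hA : μ A ≠ ⊤) :
    ∃ R, ∀ x ∈ interior A, ∃ r ∈ Ioc 0 R, μ (closedBall x r ∩ A) = μ (closedBall x r) / 2 := by
  obtain ⟨R, hR, hR_pos⟩ := (((tendsto_measureReal_closedBall_atTop μ 0).eventually_ge_atTop
    (2 * μ.real A)).and (eventually_gt_atTop 0)).exists
  refine ⟨R, fun x hx => ?_⟩
  obtain ⟨ρ, hρ, hρA⟩ := nhds_basis_closedBall.mem_iff.1 (mem_interior_iff_mem_nhds.1 hx)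
  set a := min ρ R
  have ha : 0 < a := lt_min hρ hR_pos
  let excess (r : ℝ) := μ.real (closedBall x r ∩ A) - μ.real (closedBall x r) / 2
  have h_cont : ContinuousOn excess (Icc a R) := by
    have h_ball : ContinuousOn (fun r => μ.real (closedBall x r)) (Icc a R) :=
      (continuousOn_measureReal_closedBall μ x).mono
        (Icc_subset_Ici_self.trans (Ici_subset_Ici.2 ha.le))
    exact (continuousOn_measureReal_closedBall_inter
      (fun _ => measure_closedBall_lt_top.ne) h_ball A).sub (h_ball.div_const 2)
  have h_start : 0 ≤ excess a := by
    have h_sub : closedBall x a ⊆ A :=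
      (closedBall_subset_closedBall (min_le_left ρ R)).trans hρA
    simp only [excess, inter_eq_left.2 h_sub, sub_nonneg]
    exact half_le_self measureReal_nonneg
  have h_end : excess R ≤ 0 := by
    have h_le : μ.real (closedBall x R ∩ A) ≤ μ.real A := measureReal_mono inter_subset_right hA
    have h_center : μ.real (closedBall x R) = μ.real (closedBall 0 R) :=
      congrArg ENNReal.toReal (μ.addHaar_closedBall_center x R)
    simp only [excess, h_center]
    linarith
  obtain ⟨r, hr, hr_eq⟩ :=
    intermediate_value_Icc' (min_le_right ρ R) h_cont ⟨h_end, h_start⟩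
  refine ⟨r, ⟨ha.trans_le hr.1, hr.2⟩, ?_⟩
  rw [← ENNReal.toReal_eq_toReal_iff' (measure_ne_top_of_subset inter_subset_right hA)
    (ENNReal.div_ne_top measure_closedBall_lt_top.ne two_ne_zero)]
  simpa [excess, measureReal_def, sub_eq_zero] using hr_eq

end HalfBall

theorem exists_countable_closedBall_cover_tsum_le {X : Type*} [PseudoMetricSpace X]
    [TopologicalSpace.SeparableSpace X] [MeasurableSpace X] [OpensMeasurableSpace X]
    (ν : Measure X) {S : Set X} {R : ℝ} {f : ℝ → ℝ≥0∞}
    (h : ∀ x ∈ S, ∃ r ∈ Ioc 0 R, f r ≤ ν (closedBall x r)) :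
    ∃ (u : Set X) (r : X → ℝ), u.Countable ∧ (∀ a ∈ u, 0 < r a) ∧
      S ⊆ ⋃ a ∈ u, closedBall a (5 * r a) ∧ ∑' a : u, f (r a) ≤ ν univ := by
  choose! r hr hfr using h
  obtain ⟨u, huS, h_disj, h_cov⟩ :=
    Vitali.exists_disjoint_subfamily_covering_enlargement_closedBall S id r R
      (fun x hx => (hr x hx).2) 5 (by norm_num)
  have hu : u.Countable := h_disj.countable_of_nonempty_interior fun a ha =>
    ⟨a, ball_subset_interior_closedBall (mem_ball_self (hr a (huS ha)).1)⟩
  refine ⟨u, r, hu, fun a ha => (hr a (huS ha)).1, fun x hx => ?_, ?_⟩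
  · obtain ⟨b, hb, hsub⟩ := h_cov x hx
    exact mem_iUnion₂.2 ⟨b, hb, hsub (mem_closedBall_self (hr x hx).1.le)⟩
  · calc ∑' a : u, f (r a) ≤ ∑' a : u, ν (closedBall a (r a)) :=
          ENNReal.tsum_le_tsum fun a => hfr a (huS a.2)
      _ = ν (⋃ a ∈ u, closedBall a (r a)) :=
          (measure_biUnion hu h_disj fun _ _ => measurableSet_closedBall).symm
      _ ≤ ν univ := measure_mono (subset_univ _)

theorem exists_cover_interior_tsum_le_hausdorffMeasure_frontier {n : ℕ}
    {A : Set (Fin (n + 1) → ℝ)} (hA : volume A ≠ ⊤) :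
    ∃ (u : Set (Fin (n + 1) → ℝ)) (r : (Fin (n + 1) → ℝ) → ℝ), u.Countable ∧
      (∀ a ∈ u, 0 < r a) ∧ interior A ⊆ ⋃ a ∈ u, closedBall a (5 * r a) ∧
      ∑' a : u, ENNReal.ofReal (r a) ^ n ≤ 4 * (n + 1) * μH[n] (frontier A) := by
  obtain ⟨R, hR⟩ := exists_measure_closedBall_inter_eq_half volume hA
  simpa using exists_countable_closedBall_cover_tsum_le (S := interior A) (R := R)
    (f := fun r => ENNReal.ofReal r ^ n)
    ((4 * (n + 1) : ℝ≥0∞) • μH[n].restrict (frontier A)) fun x hx => by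
      obtain ⟨r, hr, half⟩ := hR x hx
      refine ⟨r, hr, ?_⟩
      calc ENNReal.ofReal r ^ n ≤ ENNReal.ofReal (2 * r) ^ n := by
            gcongr
            linarith [hr.1]
        _ ≤ 4 * (n + 1) * μH[n] (frontier A ∩ closedBall x r) :=
            ofReal_pow_le_hausdorffMeasure_frontier hr.1 half
        _ = _ := by
            rw [Measure.smul_apply, Measure.restrict_apply measurableSet_closedBall, inter_comm,
              smul_eq_mul]

lemma hausdorffContent_le_tsum {d : ℕ} {α : ℝ} (hα : 0 < α) {ω : Set (EuclideanSpace ℝ (Fin d))}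
    {ι : Type*} [Countable ι] {c : ι → EuclideanSpace ℝ (Fin d)} {r : ι → ℝ} (hr : ∀ i, 0 < r i)
    (h_cov : ω ⊆ ⋃ i, closedBall (c i) (r i)) :
    hausdorffContent d α ω ≤ ∑' i, ENNReal.ofReal (r i ^ α) := by
  refine ENNReal.le_of_forall_pos_le_add fun ε hε _ => ?_
  obtain ⟨δ, hδ, hδ_sum⟩ := ENNReal.exists_pos_sum_of_countable (ε := ε) (by simpa using hε.ne') ℕ
  obtain ⟨e⟩ : Nonempty (ℕ ≃ ι ⊕ ℕ) := nonempty_equiv_of_countable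
  -- The content is an infimum over sequences, so the given balls are padded with infinitely many
  -- negligible ones.
  let c' : ι ⊕ ℕ → EuclideanSpace ℝ (Fin d) := Sum.elim c fun _ => 0
  let r' : ι ⊕ ℕ → ℝ := Sum.elim r fun j => (δ j : ℝ) ^ α⁻¹
  have hr' : ∀ i, 0 < r' i := by
    rintro (i | j)
    exacts [hr i, Real.rpow_pos_of_pos (hδ j) _]
  have h_cov' : ω ⊆ ⋃ j, closedBall (c' (e j)) (r' (e j)) := fun x hx => by
    obtain ⟨i, hi⟩ := mem_iUnion.1 (h_cov hx)
    exact mem_iUnion.2 ⟨e.symm (.inl i), by simpa [c', r'] using hi⟩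
  calc hausdorffContent d α ω ≤ ∑' j, ENNReal.ofReal (r' (e j) ^ α) :=
        iInf₂_le_of_le (c' ∘ e) (r' ∘ e) (iInf₂_le (fun j => hr' (e j)) h_cov')
    _ = ∑' i, ENNReal.ofReal (r i ^ α) + ∑' j, (δ j : ℝ≥0∞) := by
        rw [e.tsum_eq fun i => ENNReal.ofReal (r' i ^ α),
          ENNReal.summable.tsum_sum ENNReal.summable]
        simp [r', Real.rpow_inv_rpow, hα.ne']
    _ ≤ ∑' i, ENNReal.ofReal (r i ^ α) + ε := by gcongr

theorem hausdorffContent_le_hausdorffMeasure_frontier {n : ℕ} (hn : n ≠ 0) {K : NNReal} (hK : 0 < K)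
    (h_anti : AntilipschitzWith K (WithLp.ofLp : EuclideanSpace ℝ (Fin (n + 1)) → _))
    {ω : Set (EuclideanSpace ℝ (Fin (n + 1)))} (hω : IsOpen ω) (h_vol : volume ω ≠ ⊤) :
    hausdorffContent (n + 1) n ω ≤ (5 * K) ^ n * (4 * (n + 1)) * μH[n] (frontier ω) := by
  let e := PiLp.homeomorph 2 fun _ : Fin (n + 1) => ℝ
  let A : Set (Fin (n + 1) → ℝ) := e.symm ⁻¹' ω
  have hA : IsOpen A := hω.preimage e.symm.continuous
  have hA_vol : volume A ≠ ⊤ :=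
    ((PiLp.volume_preserving_toLp _).measure_preimage hω.nullMeasurableSet).trans_ne h_vol
  have h_frontier : μH[n] (frontier A) ≤ μH[n] (frontier ω) := by
    rw [← e.symm.preimage_frontier, ← e.image_eq_preimage_symm]
    change μH[n] (WithLp.ofLp '' frontier ω) ≤ μH[n] (frontier ω)
    simpa using (PiLp.lipschitzWith_ofLp 2 _).hausdorffMeasure_image_le n.cast_nonneg (frontier ω)
  obtain ⟨u, r, hu, hr, h_cov, h_sum⟩ :=
    exists_cover_interior_tsum_le_hausdorffMeasure_frontier hA_vol
  have : Countable u := hu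
  have h_cov' : ω ⊆ ⋃ a : u, closedBall (e.symm a) (K * (5 * r a)) := fun x hx => by
    have hx' : e x ∈ interior A := hA.interior_eq.symm ▸ hx
    obtain ⟨a, ha, hxa⟩ := mem_iUnion₂.1 (h_cov hx')
    exact mem_iUnion.2 ⟨⟨a, ha⟩, (h_anti.le_mul_dist x (e.symm a)).trans
      (mul_le_mul_of_nonneg_left hxa K.coe_nonneg)⟩
  calc hausdorffContent (n + 1) n ω
      ≤ ∑' a : u, ENNReal.ofReal ((K * (5 * r a)) ^ (n : ℝ)) :=
        hausdorffContent_le_tsum (by positivity)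
          (fun a => mul_pos hK (mul_pos (by norm_num) (hr a a.2))) h_cov'
    _ = (5 * K) ^ n * ∑' a : u, ENNReal.ofReal (r a) ^ n := by
        rw [← ENNReal.tsum_mul_left]
        congr! 2 with a
        have := (hr a a.2).le
        rw [Real.rpow_natCast, ENNReal.ofReal_pow (by positivity), ← mul_pow, ← mul_assoc,
          ENNReal.ofReal_mul (by positivity), ENNReal.ofReal_mul (by positivity),
          ENNReal.ofReal_coe_nnreal, mul_comm (5 : ℝ≥0∞), ENNReal.ofReal_ofNat]
    _ ≤ (5 * K) ^ n * (4 * (n + 1) * μH[n] (frontier ω)) := by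
        gcongr
        exact h_sum.trans (by gcongr)
    _ = _ := (mul_assoc _ _ _).symm

theorem gustin_boxing_general (d : ℕ) (hd : 2 ≤ d) :
    ∃ C : ℝ≥0∞, 0 < C ∧ C < ⊤ ∧ ∀ ω : Set (EuclideanSpace ℝ (Fin d)),
      IsOpen ω → volume ω ≠ ⊤ →
      hausdorffContent d ((d : ℝ) - 1) ω ≤ C * μH[(d : ℝ) - 1] (frontier ω) := by
  obtain ⟨n, rfl⟩ := Nat.exists_eq_add_of_le' (one_le_two.trans hd)
  have h_anti := PiLp.antilipschitzWith_ofLp 2 fun _ : Fin (n + 1) => ℝ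
  set K : NNReal := (Fintype.card (Fin (n + 1)) : NNReal) ^ (1 / (2 : ℝ≥0∞)).toReal
  have hK : 0 < K := NNReal.rpow_pos (by simp)
  refine ⟨(5 * K) ^ n * (4 * (n + 1)), ?_, ?_, fun ω hω h_vol => ?_⟩
  · positivity
  · finiteness
  · simpa using hausdorffContent_le_hausdorffMeasure_frontier (by lia) hK h_anti hω h_vol

/-- Gustin's boxing inequality. Smooth boundary is encoded via local
smooth defining functions with nonvanishing derivative. -/
theorem gustin_boxing (d : ℕ) (hd : 2 ≤ d) :
    ∃ C : ℝ≥0∞, 0 < C ∧ C < ⊤ ∧ ∀ ω : Set (EuclideanSpace ℝ (Fin d)),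
      IsOpen ω → Bornology.IsBounded ω →
      (∀ x ∈ frontier ω, ∃ U : Set (EuclideanSpace ℝ (Fin d)), IsOpen U ∧ x ∈ U ∧
        ∃ f : EuclideanSpace ℝ (Fin d) → ℝ, ContDiff ℝ (⊤ : ℕ∞) f ∧
          (∀ y ∈ U, fderiv ℝ f y ≠ 0) ∧ ω ∩ U = {y ∈ U | f y < 0}) →
      hausdorffContent d ((d : ℝ) - 1) ω ≤ C * μH[(d : ℝ) - 1] (frontier ω) := by
  obtain ⟨C, hC_pos, hC_top, hC⟩ := gustin_boxing_general d hd
  exact ⟨C, hC_pos, hC_top, fun ω hω h_bdd _ => hC ω hω h_bdd.measure_lt_top.ne⟩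
end
end

section
/- Adams's inequality (one direction): let a ∈ (0,d) and let f be a nonnegative locally integrable function on ℝ^d with ‖M_a[f]‖_{L^∞} < ∞, where M_a[f](x) = sup_{r>0} r^{a-d} ∫_{|x-y|≤r} f(y) dy is the fractional maximal function. Then ‖I_a[f]‖_{BMO} ≤ C‖M_a[f]‖_{L^∞} with C depending only on a and d. -/
open MeasureTheory Real Metric Set
open scoped FourierTransform ENNReal
noncomputable section

/-!
Let `ν = |f| dy`. Finiteness of the fractional maximal function says that `ν` has growth of
exponent `d - a` on balls. On a ball `B` of radius `R` about a point `x₀` where the potential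
converges, split `f` at the concentric ball `2B`. By Tonelli, the near part has `L¹(B)`-norm at
most `ν(2B)` times the largest integral over `B` of `|x - y| ^ (a - d)`, which is of order
`R ^ (d - a) * R ^ a = R ^ d`. The far part differs from its value at `x₀` by at most a constant
times `R * ∫ |x₀ - y| ^ (a - d - 1) dν` over the complement of `2B`, which is bounded by a sum over
dyadic annuli.
-/

lemma abs_rpow_sub_rpow_le {p m u v : ℝ} (hp : p ≤ 1) (hm : 0 < m) (hu : m ≤ u) (hv : m ≤ v) :
    |u ^ p - v ^ p| ≤ |p| * m ^ (p - 1) * |u - v| := by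
  have hpos : ∀ w ∈ Ici m, 0 < w := fun w hw => hm.trans_le hw
  refine (convex_Ici m).norm_image_sub_le_of_norm_hasDerivWithin_le (f := (· ^ p))
    (fun w hw => (Real.hasDerivAt_rpow_const (Or.inl (hpos w hw).ne')).hasDerivWithinAt)
    (fun w hw => ?_) hv hu
  rw [norm_mul, Real.norm_eq_abs, Real.norm_of_nonneg (Real.rpow_nonneg (hpos w hw).le _)]
  exact mul_le_mul_of_nonneg_left (Real.rpow_le_rpow_of_nonpos hm hw (by linarith)) (abs_nonneg p)

lemma abs_dist_rpow_sub_dist_rpow_le {X : Type*} [PseudoMetricSpace X] {p : ℝ} {x x₀ y : X}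
    (hp : p ≤ 1) (hy : 0 < dist x₀ y) (hx : dist x x₀ ≤ dist x₀ y / 2) :
    |dist x y ^ p - dist x₀ y ^ p| ≤ |p| * (dist x₀ y / 2) ^ (p - 1) * dist x x₀ := by
  have := dist_triangle_left x₀ y x
  calc _ ≤ |p| * (dist x₀ y / 2) ^ (p - 1) * |dist x y - dist x₀ y| :=
        abs_rpow_sub_rpow_le hp (by positivity) (by linarith) (by linarith)
    _ ≤ |p| * (dist x₀ y / 2) ^ (p - 1) * dist x x₀ := by
        gcongr
        exact abs_dist_sub_le x x₀ y

section BallGrowth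

variable {X : Type*} [PseudoMetricSpace X] [MeasurableSpace X]
  {μ ν : Measure X} {K L : ℝ≥0∞} {s t p R : ℝ} {x₀ x : X}

/-- Upper Ahlfors regularity: balls of radius `r` have `ν`-measure at most `K * r ^ s`. The value
`K = ∞`, for which this is no constraint, is allowed. -/
def BallGrowth (ν : Measure X) (s : ℝ) (K : ℝ≥0∞) : Prop :=
  ∀ x r, 0 < r → ν (closedBall x r) ≤ K * ENNReal.ofReal (r ^ s)

lemma BallGrowth.of_ae [μ.IsOpenPosMeasure]
    (h : ∀ᵐ x ∂μ, ∀ r, 0 < r → ν (closedBall x r) ≤ K * ENNReal.ofReal (r ^ s)) :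
    BallGrowth ν s (ENNReal.ofReal (2 ^ s) * K) := by
  intro x r hr
  obtain ⟨z, hz, hxz⟩ := (Measure.dense_of_ae h).exists_dist_lt x hr
  calc ν (closedBall x r) ≤ ν (closedBall z (2 * r)) :=
        measure_mono (closedBall_subset_closedBall' (by linarith))
    _ ≤ K * ENNReal.ofReal ((2 * r) ^ s) := hz _ (by positivity)
    _ = ENNReal.ofReal (2 ^ s) * K * ENNReal.ofReal (r ^ s) := by
        rw [Real.mul_rpow zero_le_two hr.le, ENNReal.ofReal_mul (by positivity)]
        ring

variable [OpensMeasurableSpace X]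

lemma lintegral_annulus_dist_rpow_le (hν : BallGrowth ν s K) (hp : p ≤ 0) (hR : 0 < R) :
    ∫⁻ y in closedBall x (2 * R) \ ball x R, ENNReal.ofReal (dist x y ^ p) ∂ν ≤
      K * ENNReal.ofReal (2 ^ s * R ^ (s + p)) :=
  calc ∫⁻ y in closedBall x (2 * R) \ ball x R, ENNReal.ofReal (dist x y ^ p) ∂ν
      ≤ ∫⁻ _ in closedBall x (2 * R) \ ball x R, ENNReal.ofReal (R ^ p) ∂ν := by
        refine setLIntegral_mono' (measurableSet_closedBall.diff measurableSet_ball)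
          fun y hy => ENNReal.ofReal_le_ofReal (Real.rpow_le_rpow_of_nonpos hR ?_ hp)
        simpa only [mem_ball', not_lt] using hy.2
    _ ≤ ENNReal.ofReal (R ^ p) * (K * ENNReal.ofReal ((2 * R) ^ s)) := by
        rw [setLIntegral_const]
        gcongr
        exact (measure_mono sdiff_subset).trans (hν x _ (by positivity))
    _ = K * ENNReal.ofReal (2 ^ s * R ^ (s + p)) := by
        rw [mul_left_comm, ← ENNReal.ofReal_mul (by positivity), Real.mul_rpow zero_le_two hR.le,
          Real.rpow_add hR]
        ring_nf

lemma lintegral_iUnion_annuli_dist_rpow_le (hν : BallGrowth ν s K) (hp : p ≤ 0) (hR : 0 < R)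
    {b : ℝ} (hb : 0 < b) (hbsp : b ^ (s + p) < 1) :
    ∫⁻ y in ⋃ k : ℕ, closedBall x (2 * (b ^ k * R)) \ ball x (b ^ k * R),
        ENNReal.ofReal (dist x y ^ p) ∂ν ≤
      K * ENNReal.ofReal (2 ^ s * R ^ (s + p) * (1 - b ^ (s + p))⁻¹) := by
  have hb0 : 0 ≤ b ^ (s + p) := by positivity
  have hscale (k : ℕ) : (b ^ k * R) ^ (s + p) = R ^ (s + p) * (b ^ (s + p)) ^ k := by
    rw [Real.mul_rpow (by positivity) hR.le, Real.rpow_pow_comm hb.le, mul_comm]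
  calc _ ≤ ∑' k : ℕ, K * ENNReal.ofReal (2 ^ s * (b ^ k * R) ^ (s + p)) :=
        (lintegral_iUnion_le _ _).trans <| ENNReal.tsum_le_tsum fun k =>
          lintegral_annulus_dist_rpow_le hν hp (by positivity)
    _ = K * ENNReal.ofReal (∑' k : ℕ, 2 ^ s * R ^ (s + p) * (b ^ (s + p)) ^ k) := by
        simp only [hscale, ← mul_assoc]
        rw [ENNReal.tsum_mul_left, ENNReal.ofReal_tsum_of_nonneg (fun k => by positivity)
          ((summable_geometric_of_lt_one hb0 hbsp).mul_left _)]
    _ = K * ENNReal.ofReal (2 ^ s * R ^ (s + p) * (1 - b ^ (s + p))⁻¹) := by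
        rw [tsum_mul_left, tsum_geometric_of_lt_one hb0 hbsp]

lemma lintegral_compl_ball_dist_rpow_le (hν : BallGrowth ν s K) (hp : p ≤ 0) (hsp : s + p < 0)
    (hR : 0 < R) :
    ∫⁻ y in (ball x R)ᶜ, ENNReal.ofReal (dist x y ^ p) ∂ν ≤
      K * ENNReal.ofReal (2 ^ s * R ^ (s + p) * (1 - 2 ^ (s + p))⁻¹) := by
  refine (lintegral_mono_set fun y hy => ?_).trans <| lintegral_iUnion_annuli_dist_rpow_le hν hp hR
    zero_lt_two (Real.rpow_lt_one_of_one_lt_of_neg one_lt_two hsp)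
  rw [mem_compl_iff, mem_ball, not_lt] at hy
  obtain ⟨k, hk, hk'⟩ := exists_nat_pow_near ((one_le_div hR).2 hy) one_lt_two
  rw [le_div_iff₀ hR] at hk
  rw [div_lt_iff₀ hR, pow_succ'] at hk'
  simp only [mem_iUnion, mem_sdiff, mem_closedBall, mem_ball, not_lt]
  exact ⟨k, by linarith, hk⟩

lemma lintegral_ball_dist_rpow_le (hν : BallGrowth ν s K) (hp : p < 0) (hsp : 0 < s + p)
    (hR : 0 < R) :
    ∫⁻ y in ball x R, ENNReal.ofReal (dist x y ^ p) ∂ν ≤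
      K * ENNReal.ofReal (2 ^ s * (R / 2) ^ (s + p) * (1 - (1 / 2) ^ (s + p))⁻¹) := by
  have hcenter : ∫⁻ y in {y | dist x y = 0}, ENNReal.ofReal (dist x y ^ p) ∂ν = 0 := by
    refine (setLIntegral_congr_fun (g := 0) ?_ fun y hy => ?_).trans (by simp)
    · exact measurableSet_eq_fun (by fun_prop) measurable_const
    · rw [mem_ofPred_eq] at hy
      simp [hy, Real.zero_rpow hp.ne]
  have hcover : ball x R ⊆ {y | dist x y = 0} ∪
      ⋃ k : ℕ, closedBall x (2 * ((1 / 2) ^ k * (R / 2))) \ ball x ((1 / 2) ^ k * (R / 2)) := by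
    intro y hy
    rw [mem_ball'] at hy
    rcases dist_nonneg.eq_or_lt' (a := dist x y) with h | h
    · exact Or.inl h
    obtain ⟨k, hk, hk'⟩ := exists_nat_pow_near_of_lt_one (div_pos h hR)
      ((div_le_one hR).2 hy.le) one_half_pos one_half_lt_one
    rw [lt_div_iff₀ hR, pow_succ'] at hk
    rw [div_le_iff₀ hR] at hk'
    simp only [mem_union, mem_iUnion, mem_sdiff, mem_closedBall', mem_ball', not_lt]
    exact Or.inr ⟨k, by linarith, by linarith⟩
  calc _ ≤ _ := (lintegral_mono_set hcover).trans (lintegral_union_le _ _ _)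
    _ ≤ _ := by
      rw [hcenter, zero_add]
      exact lintegral_iUnion_annuli_dist_rpow_le hν hp.le (by positivity) one_half_pos
        (Real.rpow_lt_one one_half_pos.le one_half_lt_one hsp)

lemma lintegral_compl_ball_dist_rpow_sub_le (hν : BallGrowth ν s K)
    (hp : p ≤ 1) (hsp : s + p < 1) (hx : x ∈ ball x₀ R) :
    ∫⁻ y in (ball x₀ (2 * R))ᶜ, ‖dist x y ^ p - dist x₀ y ^ p‖ₑ ∂ν ≤
      K * ENNReal.ofReal (|p| * 4 ^ s * (1 - 2 ^ (s + p - 1))⁻¹ * R ^ (s + p)) := by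
  have hR : 0 < R := pos_of_mem_ball hx
  have hpointwise : ∀ y ∈ (ball x₀ (2 * R))ᶜ, ‖dist x y ^ p - dist x₀ y ^ p‖ₑ ≤
      ENNReal.ofReal (|p| * (1 / 2) ^ (p - 1) * R) * ENNReal.ofReal (dist x₀ y ^ (p - 1)) := by
    intro y hy
    rw [mem_compl_iff, mem_ball', not_lt] at hy
    rw [mem_ball] at hx
    rw [Real.enorm_eq_ofReal_abs, ← ENNReal.ofReal_mul (by positivity)]
    refine ENNReal.ofReal_le_ofReal ?_
    calc _ ≤ |p| * (dist x₀ y / 2) ^ (p - 1) * dist x x₀ :=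
          abs_dist_rpow_sub_dist_rpow_le hp (by linarith) (by linarith)
      _ ≤ |p| * (dist x₀ y / 2) ^ (p - 1) * R := by gcongr
      _ = |p| * (1 / 2) ^ (p - 1) * R * dist x₀ y ^ (p - 1) := by
          rw [div_eq_mul_one_div, Real.mul_rpow dist_nonneg one_half_pos.le]
          ring
  calc _ ≤ ENNReal.ofReal (|p| * (1 / 2) ^ (p - 1) * R) *
          ∫⁻ y in (ball x₀ (2 * R))ᶜ, ENNReal.ofReal (dist x₀ y ^ (p - 1)) ∂ν := by
        rw [← lintegral_const_mul' _ _ ENNReal.ofReal_ne_top]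
        exact setLIntegral_mono' measurableSet_ball.compl hpointwise
    _ ≤ ENNReal.ofReal (|p| * (1 / 2) ^ (p - 1) * R) * (K * ENNReal.ofReal
          (2 ^ s * (2 * R) ^ (s + (p - 1)) * (1 - 2 ^ (s + (p - 1)))⁻¹)) := by
        gcongr
        exact lintegral_compl_ball_dist_rpow_le hν (by linarith) (by linarith) (by positivity)
    _ = K * ENNReal.ofReal (|p| * 4 ^ s * (1 - 2 ^ (s + p - 1))⁻¹ * R ^ (s + p)) := by
        rw [mul_left_comm, ← ENNReal.ofReal_mul (by positivity)]
        congr 2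
        have h4 : (4 : ℝ) ^ s = 2 ^ s * 2 ^ s := by
          rw [← Real.mul_rpow zero_le_two zero_le_two]
          norm_num
        rw [← add_sub_assoc, one_div, Real.inv_rpow zero_le_two, Real.mul_rpow zero_le_two hR.le,
          Real.rpow_sub_one hR.ne', Real.rpow_sub_one two_ne_zero, Real.rpow_sub_one two_ne_zero,
          Real.rpow_add zero_lt_two, h4]
        field_simp

lemma lintegral_ball_lintegral_ball_dist_rpow_le
    [SecondCountableTopology X] [SFinite μ] [SFinite ν] (hμ : BallGrowth μ t L)
    (hν : BallGrowth ν s K) (hp : p < 0) (htp : 0 < t + p) (hR : 0 < R) :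
    ∫⁻ x in ball x₀ R, ∫⁻ y in ball x₀ (2 * R), ENNReal.ofReal (dist x y ^ p) ∂ν ∂μ ≤
      K * L * ENNReal.ofReal (2 ^ (s + t) * (3 / 2) ^ (t + p) * (1 - (1 / 2) ^ (t + p))⁻¹ *
        R ^ (s + t + p)) := by
  set N := 2 ^ t * (3 * R / 2) ^ (t + p) * (1 - (1 / 2) ^ (t + p))⁻¹ with hN
  have hinner : ∀ y ∈ ball x₀ (2 * R),
      ∫⁻ x in ball x₀ R, ENNReal.ofReal (dist x y ^ p) ∂μ ≤ L * ENNReal.ofReal N := by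
    intro y hy
    have hsub : ball x₀ R ⊆ ball y (3 * R) :=
      ball_subset_ball' (by linarith [mem_ball'.1 hy])
    simp only [dist_comm _ y]
    exact (lintegral_mono_set hsub).trans (lintegral_ball_dist_rpow_le hμ hp htp (by positivity))
  calc _ = ∫⁻ y in ball x₀ (2 * R), ∫⁻ x in ball x₀ R, ENNReal.ofReal (dist x y ^ p) ∂μ ∂ν :=
        lintegral_lintegral_swap (by fun_prop)
    _ ≤ ∫⁻ _ in ball x₀ (2 * R), L * ENNReal.ofReal N ∂ν :=
        setLIntegral_mono' measurableSet_ball hinner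
    _ ≤ L * ENNReal.ofReal N * (K * ENNReal.ofReal ((2 * R) ^ s)) := by
        rw [setLIntegral_const]
        gcongr
        exact (measure_mono ball_subset_closedBall).trans (hν x₀ _ (by positivity))
    _ = K * L * ENNReal.ofReal ((2 * R) ^ s * N) := by
        rw [ENNReal.ofReal_mul (p := (2 * R) ^ s) (by positivity)]
        ac_rfl
    _ = _ := by
        congr 2
        rw [hN, mul_div_right_comm, Real.mul_rpow zero_le_two hR.le,
          Real.mul_rpow (by norm_num) hR.le, add_assoc s, Real.rpow_add zero_lt_two,
          Real.rpow_add hR s]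
        ring

end BallGrowth

section Potential

lemma enorm_integral_sub_setIntegral_compl_le {X E : Type*} [MeasurableSpace X]
    [NormedAddCommGroup E] [NormedSpace ℝ E] {μ : Measure X} {u v : X → E} {A : Set X}
    (hA : MeasurableSet A) (hu : AEStronglyMeasurable u μ) (hv : IntegrableOn v Aᶜ μ) :
    ‖∫ y, u y ∂μ - ∫ y in Aᶜ, v y ∂μ‖ₑ ≤
      ∫⁻ y in A, ‖u y‖ₑ ∂μ + ∫⁻ y in Aᶜ, ‖u y - v y‖ₑ ∂μ := by
  rcases eq_or_ne (∫⁻ y in A, ‖u y‖ₑ ∂μ) ⊤ with hnear | hnear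
  · simp [hnear]
  rcases eq_or_ne (∫⁻ y in Aᶜ, ‖u y - v y‖ₑ ∂μ) ⊤ with hfar | hfar
  · simp [hfar]
  have huA : IntegrableOn u A μ := ⟨hu.restrict, hnear.lt_top⟩
  have huv : IntegrableOn (u - v) Aᶜ μ := ⟨hu.restrict.sub hv.1, hfar.lt_top⟩
  have huAc : IntegrableOn u Aᶜ μ := by simpa only [sub_add_cancel] using huv.add hv
  have hsplit : ∫ y, u y ∂μ - ∫ y in Aᶜ, v y ∂μ =
      ∫ y in A, u y ∂μ + ∫ y in Aᶜ, (u y - v y) ∂μ := by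
    rw [← integral_add_compl hA (integrableOn_univ.1 (union_compl_self A ▸ huA.union huAc)),
      integral_sub huAc hv, add_sub_assoc]
  rw [hsplit]
  exact (enorm_add_le _ _).trans <|
    add_le_add (enorm_integral_le_lintegral_enorm _) (enorm_integral_le_lintegral_enorm _)

variable {X : Type*} [PseudoMetricSpace X] [MeasurableSpace X]
  {μ : Measure X} {K L : ℝ≥0∞} {a t p r R : ℝ} {f : X → ℝ}

/-- The potential of `f` with kernel `dist x y ^ p`. For `p = a - d` on `ℝ^d` it is the Riesz
potential of order `a` without its normalizing constant. Like the Bochner integral, it takes the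
value `0` at points where the integrand is not integrable. -/
def distPotential (μ : Measure X) (p : ℝ) (f : X → ℝ) (x : X) : ℝ :=
  ∫ y, f y * dist x y ^ p ∂μ

variable [OpensMeasurableSpace X]

lemma enorm_distPotential_sub_le (hf : AEStronglyMeasurable f μ) {A : Set X}
    (hA : MeasurableSet A) {x₀ : X} (hx₀ : IntegrableOn (fun y => f y * dist x₀ y ^ p) Aᶜ μ)
    (x : X) :
    ‖distPotential μ p f x - ∫ y in Aᶜ, f y * dist x₀ y ^ p ∂μ‖ₑ ≤
      ∫⁻ y in A, ENNReal.ofReal (dist x y ^ p) ∂μ.withDensity (‖f ·‖ₑ) +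
        ∫⁻ y in Aᶜ, ‖dist x y ^ p - dist x₀ y ^ p‖ₑ ∂μ.withDensity (‖f ·‖ₑ) := by
  have hkernel (z : X) : Measurable fun y => dist z y ^ p :=
    (continuous_const.dist continuous_id).measurable.pow_const p
  rw [setLIntegral_withDensity_eq_lintegral_mul₀ hf.enorm (by fun_prop) hA,
    setLIntegral_withDensity_eq_lintegral_mul₀ hf.enorm (by fun_prop) hA.compl]
  refine (enorm_integral_sub_setIntegral_compl_le hA
    (hf.mul (hkernel x).aestronglyMeasurable) hx₀).trans_eq ?_
  simp only [Pi.mul_apply, ← mul_sub, enorm_mul,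
    Real.enorm_eq_ofReal (Real.rpow_nonneg dist_nonneg p)]

variable [SecondCountableTopology X] [SFinite μ]

lemma aestronglyMeasurable_distPotential (hf : AEStronglyMeasurable f μ) :
    AEStronglyMeasurable (distPotential μ p f) μ := by
  have hkernel : Measurable fun z : X × X => dist z.1 z.2 ^ p := by fun_prop
  exact (hf.comp_snd.mul hkernel.aestronglyMeasurable).integral_prod_right'

/-- The constant in the oscillation bound for the potential with kernel `dist x y ^ (a - t)`: the
first summand comes from the near part, the second from the far part. -/
def potentialOscConst (a t : ℝ) : ℝ :=
  2 ^ (t - a + t) * (3 / 2) ^ a * (1 - (1 / 2) ^ a)⁻¹ + |a - t| * 4 ^ (t - a) * 2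

lemma lintegral_ball_distPotential_sub_le (ha : 0 < a) (hat : a < t) (hμ : BallGrowth μ t L)
    (hf : AEStronglyMeasurable f μ) (hν : BallGrowth (μ.withDensity (‖f ·‖ₑ)) (t - a) K)
    (hR : 0 < R) {x₀ : X}
    (hx₀ : IntegrableOn (fun y => f y * dist x₀ y ^ (a - t)) (ball x₀ (2 * R))ᶜ μ) :
    ∫⁻ x in ball x₀ R, ‖distPotential μ (a - t) f x -
        ∫ y in (ball x₀ (2 * R))ᶜ, f y * dist x₀ y ^ (a - t) ∂μ‖ₑ ∂μ ≤
      K * L * ENNReal.ofReal (potentialOscConst a t * R ^ t) := by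
  set ν := μ.withDensity (‖f ·‖ₑ)
  have hnear := lintegral_ball_lintegral_ball_dist_rpow_le (x₀ := x₀) hμ hν (p := a - t)
    (by linarith) (by linarith) hR
  have hfar : ∀ x ∈ ball x₀ R,
      ∫⁻ y in (ball x₀ (2 * R))ᶜ, ‖dist x y ^ (a - t) - dist x₀ y ^ (a - t)‖ₑ ∂ν ≤
        K * ENNReal.ofReal (|a - t| * 4 ^ (t - a) * 2) := by
    intro x hx
    have hst : t - a + (a - t) = 0 := by ring
    convert lintegral_compl_ball_dist_rpow_sub_le hν (p := a - t) (by linarith) (by linarith) hx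
      using 3
    rw [hst, Real.rpow_zero, zero_sub, Real.rpow_neg_one]
    norm_num
  have hexp : t - a + t + (a - t) = t := by ring
  rw [add_sub_cancel t a, hexp] at hnear
  set N : ℝ := 2 ^ (t - a + t) * (3 / 2) ^ a * (1 - (1 / 2) ^ a)⁻¹ with hN
  set F := |a - t| * 4 ^ (t - a) * 2 with hF
  have hN0 : 0 ≤ N := by
    have := Real.rpow_lt_one one_half_pos.le one_half_lt_one ha
    have : 0 ≤ 1 - (1 / 2 : ℝ) ^ a := by linarith
    positivity
  calc _ ≤ ∫⁻ x in ball x₀ R, (∫⁻ y in ball x₀ (2 * R), ENNReal.ofReal (dist x y ^ (a - t)) ∂ν +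
          K * ENNReal.ofReal F) ∂μ :=
        setLIntegral_mono' measurableSet_ball fun x hx =>
          (enorm_distPotential_sub_le hf measurableSet_ball hx₀ x).trans <| by
            gcongr
            exact hfar x hx
    _ ≤ K * L * ENNReal.ofReal (N * R ^ t) +
          K * ENNReal.ofReal F * (L * ENNReal.ofReal (R ^ t)) := by
        rw [lintegral_add_right _ measurable_const, setLIntegral_const]
        gcongr
        exact (measure_mono ball_subset_closedBall).trans (hμ x₀ R hR)
    _ = K * L * ENNReal.ofReal (potentialOscConst a t * R ^ t) := by
        rw [potentialOscConst, ← hN, ← hF, add_mul, ENNReal.ofReal_add (by positivity)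
          (by positivity), ENNReal.ofReal_mul (p := F) (by positivity)]
        ring

lemma exists_lintegral_ball_distPotential_sub_le (ha : 0 < a) (hat : a < t)
    (hμ : BallGrowth μ t L) (hf : AEStronglyMeasurable f μ)
    (hν : BallGrowth (μ.withDensity (‖f ·‖ₑ)) (t - a) K) (hr : 0 < r) (x₀ : X) :
    ∃ c : ℝ, ∫⁻ x in ball x₀ r, ‖distPotential μ (a - t) f x - c‖ₑ ∂μ ≤
      K * L * ENNReal.ofReal (potentialOscConst a t * (2 * r) ^ t) := by
  by_cases h : ∃ x₁ ∈ ball x₀ r, Integrable (fun y => f y * dist x₁ y ^ (a - t)) μ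
  · obtain ⟨x₁, hx₁, hint⟩ := h
    have hsub : ball x₀ r ⊆ ball x₁ (2 * r) := ball_subset_ball' (by linarith [mem_ball'.1 hx₁])
    exact ⟨_, (lintegral_mono_set hsub).trans <|
      lintegral_ball_distPotential_sub_le ha hat hμ hf hν (by positivity) hint.integrableOn⟩
  · -- If the integral diverges at every point of the ball, the potential takes its junk value `0`.
    have hzero : ∀ x ∈ ball x₀ r, ‖distPotential μ (a - t) f x - 0‖ₑ = 0 := fun x hx => by
      rw [distPotential, integral_undef fun hint => h ⟨x, hx, hint⟩, sub_zero, enorm_zero]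
    refine ⟨0, ?_⟩
    rw [setLIntegral_congr_fun measurableSet_ball hzero, lintegral_zero]
    exact zero_le

end Potential

section MeanOscillation

lemma ofReal_integral_norm_sub_integral_le {Ω E : Type*} [MeasurableSpace Ω]
    [NormedAddCommGroup E] [NormedSpace ℝ E] [CompleteSpace E] {P : Measure Ω}
    [IsProbabilityMeasure P] {g : Ω → E} (hg : AEStronglyMeasurable g P) (c : E) :
    ENNReal.ofReal (∫ x, ‖g x - ∫ z, g z ∂P‖ ∂P) ≤ 2 * ∫⁻ x, ‖g x - c‖ₑ ∂P := by
  rcases eq_or_ne (∫⁻ x, ‖g x - c‖ₑ ∂P) ⊤ with htop | htop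
  · simp [htop]
  have hgc : Integrable (fun x => g x - c) P := ⟨hg.sub aestronglyMeasurable_const, htop.lt_top⟩
  have hgi : Integrable g P := by
    simpa only [sub_eq_add_neg, integrable_add_const_iff] using hgc
  set m := ∫ z, g z ∂P
  have hmc : ‖m - c‖ₑ ≤ ∫⁻ x, ‖g x - c‖ₑ ∂P := by
    have : m - c = ∫ x, (g x - c) ∂P := by
      simp [integral_sub hgi (integrable_const c), m]
    exact this ▸ enorm_integral_le_lintegral_enorm _
  calc ENNReal.ofReal (∫ x, ‖g x - m‖ ∂P) ≤ ∫⁻ x, ‖g x - m‖ₑ ∂P := by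
        refine (Real.ofReal_le_enorm _).trans ((enorm_integral_le_lintegral_enorm _).trans_eq ?_)
        simp only [enorm_norm]
    _ ≤ ∫⁻ x, (‖g x - c‖ₑ + ‖m - c‖ₑ) ∂P := lintegral_mono fun x => by
        simpa using enorm_sub_le (a := g x - c) (b := m - c)
    _ = ∫⁻ x, ‖g x - c‖ₑ ∂P + ‖m - c‖ₑ := by
        rw [lintegral_add_right _ measurable_const, lintegral_const, measure_univ, mul_one]
    _ ≤ 2 * ∫⁻ x, ‖g x - c‖ₑ ∂P := by
        rw [two_mul]
        gcongr

lemma bmoNorm_le_of_forall_exists {d : ℕ} {g : EuclideanSpace ℝ (Fin d) → ℝ} {M : ℝ≥0∞}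
    (hg : AEStronglyMeasurable g)
    (h : ∀ x r, 0 < r → ∃ c, ∫⁻ y in ball x r, ‖g y - c‖ₑ ≤ M * volume (ball x r)) :
    bmoNorm d g ≤ 2 * M := by
  refine iSup_le fun x => iSup₂_le fun r hr => ?_
  obtain ⟨c, hc⟩ := h x r hr
  have hpos : volume (ball x r) ≠ 0 := (measure_ball_pos volume x hr).ne'
  have hfin : volume (ball x r) ≠ ⊤ := measure_ball_lt_top.ne
  have : NeZero (volume.restrict (ball x r)) := ⟨Measure.restrict_eq_zero.not.2 hpos⟩
  have : IsFiniteMeasure (volume.restrict (ball x r)) := isFiniteMeasure_restrict.2 hfin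
  calc _ ≤ 2 * ⨍⁻ y in ball x r, ‖g y - c‖ₑ ∂volume :=
        ofReal_integral_norm_sub_integral_le (hg.restrict.smul_measure _) c
    _ ≤ 2 * M := by
        rw [setLAverage_eq volume]
        gcongr
        exact ENNReal.div_le_of_le_mul hc

end MeanOscillation

section Euclidean

variable {d : ℕ} {a : ℝ} {f : EuclideanSpace ℝ (Fin d) → ℝ}

lemma ballGrowth_volume : BallGrowth (volume : Measure (EuclideanSpace ℝ (Fin d))) d
    (volume (ball (0 : EuclideanSpace ℝ (Fin d)) 1)) := fun x r hr => by
  rw [Measure.addHaar_closedBall _ _ hr.le, finrank_euclideanSpace_fin, Real.rpow_natCast, mul_comm]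

lemma ballGrowth_withDensity_of_fracMaximal :
    BallGrowth (volume.withDensity (‖f ·‖ₑ)) (d - a)
      (ENNReal.ofReal (2 ^ (d - a)) * essSup (fracMaximal d a f) volume) := by
  refine .of_ae (μ := volume) ?_
  filter_upwards [ENNReal.ae_le_essSup (fracMaximal d a f)] with x hx r hr
  have hinv : ENNReal.ofReal (r ^ (a - d)) * ENNReal.ofReal (r ^ (d - a)) = 1 := by
    rw [← ENNReal.ofReal_mul (by positivity), ← Real.rpow_add hr]
    simp
  calc volume.withDensity (‖f ·‖ₑ) (closedBall x r)
      = ENNReal.ofReal (r ^ (a - d)) * (∫⁻ y in closedBall x r, ENNReal.ofReal |f y|) *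
          ENNReal.ofReal (r ^ (d - a)) := by
        rw [mul_right_comm, hinv, one_mul, withDensity_apply _ measurableSet_closedBall]
        simp only [Real.enorm_eq_ofReal_abs]
    _ ≤ essSup (fracMaximal d a f) volume * ENNReal.ofReal (r ^ (d - a)) := by
        gcongr
        exact (le_iSup₂ (f := fun r (_ : 0 < r) => ENNReal.ofReal (r ^ (a - d)) *
          ∫⁻ y in closedBall x r, ENNReal.ofReal |f y|) r hr).trans hx

lemma rieszPotential_eq_const_mul_distPotential :
    rieszPotential d a f = fun x => rieszConst d a * distPotential volume (a - d) f x := by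
  ext x
  simp only [rieszPotential, distPotential, dist_eq_norm]

lemma exists_lintegral_ball_rieszPotential_sub_le (ha : 0 < a) (had : a < d)
    (hf : AEStronglyMeasurable f) (x₀ : EuclideanSpace ℝ (Fin d)) {r : ℝ} (hr : 0 < r) :
    ∃ c : ℝ, ∫⁻ x in ball x₀ r, ‖rieszPotential d a f x - c‖ₑ ≤
      ‖rieszConst d a‖ₑ * ENNReal.ofReal (2 ^ (d - a) * (potentialOscConst a d * 2 ^ (d : ℝ))) *
        essSup (fracMaximal d a f) volume * volume (ball x₀ r) := by
  obtain ⟨c, hc⟩ := exists_lintegral_ball_distPotential_sub_le ha had ballGrowth_volume hf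
    ballGrowth_withDensity_of_fracMaximal hr x₀
  refine ⟨rieszConst d a * c, ?_⟩
  simp only [rieszPotential_eq_const_mul_distPotential, ← mul_sub, enorm_mul]
  rw [lintegral_const_mul' _ _ enorm_ne_top]
  refine (mul_le_mul_right hc _).trans_eq ?_
  rw [Measure.addHaar_ball_of_pos _ _ hr, finrank_euclideanSpace_fin, ← Real.rpow_natCast,
    Real.mul_rpow zero_le_two hr.le, ← mul_assoc (potentialOscConst a d),
    ENNReal.ofReal_mul' (q := r ^ (d : ℝ)) (by positivity),
    ENNReal.ofReal_mul (p := 2 ^ (d - a)) (by positivity)]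
  ac_rfl

end Euclidean

theorem adams_inequality_general (d : ℕ) (a : ℝ) (ha : 0 < a) (had : a < d) :
    ∃ C : NNReal, ∀ f : EuclideanSpace ℝ (Fin d) → ℝ, AEStronglyMeasurable f →
      bmoNorm d (rieszPotential d a f) ≤ C * essSup (fracMaximal d a f) volume := by
  refine ⟨2 * (‖rieszConst d a‖₊ *
    (2 ^ (d - a) * (potentialOscConst a d * 2 ^ (d : ℝ))).toNNReal), fun f hf => ?_⟩
  have hmeas : AEStronglyMeasurable (rieszPotential d a f) := by
    rw [rieszPotential_eq_const_mul_distPotential]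
    exact (aestronglyMeasurable_distPotential hf).const_mul _
  refine (bmoNorm_le_of_forall_exists hmeas fun x r hr =>
    exists_lintegral_ball_rieszPotential_sub_le ha had hf x hr).trans_eq ?_
  rw [← mul_assoc, ENNReal.coe_mul, ENNReal.coe_mul]
  rfl

/-- Adams's inequality `‖I_a[f]‖_{BMO} ≲ ‖M_a[f]‖_{L^∞}`. -/
theorem adams_inequality (d : ℕ) (a : ℝ) (ha : 0 < a) (had : a < d) :
    ∃ C : ℝ≥0∞, 0 < C ∧ C < ⊤ ∧ ∀ f : EuclideanSpace ℝ (Fin d) → ℝ,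
      LocallyIntegrable f volume → (∀ x, 0 ≤ f x) →
      essSup (fracMaximal d a f) volume < ⊤ →
      bmoNorm d (rieszPotential d a f) ≤ C * essSup (fracMaximal d a f) volume := by
  obtain ⟨C, hC⟩ := adams_inequality_general d a ha had
  exact ⟨C + 1, by positivity, by finiteness, fun f hf _ _ =>
    (hC f hf.aestronglyMeasurable).trans (mul_le_mul_left le_self_add _)⟩
end
end
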